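/- In the setting of the Select iteration, let u := y*_{i_u} and v := y*_{i_v} be the i_u-th and i_v-th order statistics of the random sample S of size s from S₊ of size s₊, where i_u := max{⌈θs−g⌉,1}, i_v := min{⌈θs+g⌉,s}, and let c be the number of comparisons made when partitioning the s₊ − s elements of S₊ \ S against u and v (each element compared first to v if θ < 1/2, else first to u, and to the other pivot only when needed). Let c̄ := (1 + min{θ, 1−θ})(s₊ − s) + 3g·s₊/s. Then P[c < c̄] ≥ 1 − exp(−2g²/s) and E[c] ≤ c̄ + 2(s₊ − s)·exp(−2g²/s). -/

import Mathlib

/-- The `i`-th smallest element (1-based) of a multiset of reals. -/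
noncomputable def kthSmallest (M : Multiset ℝ) (i : ℕ) : ℝ :=
  (M.sort (· ≤ ·)).getD (i - 1) 0

/-! Suppose that at most `t * s + g` elements of every sample `S` lie strictly below the pivot
`w S`, and let `A` consist of the `k + T` smallest elements of the population, where
`k = ⌊t * s + g⌋`. If at least `T` elements outside `S` lie below `w S`, then `S` has at most `k`
elements in `A`: either `A` lies below `w S`, or everything below `w S` lies in `A`. For
`T = t * (n - s) + 2 * g * n / s` the hypergeometric variable `#(S ∩ A)` is then at least `g` below
its mean, which has probability at most `exp (-2 * g ^ 2 / s)` by Hoeffding's inequality for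
sampling without replacement. The upper pivot is the same statement for the reversed order. -/

section PartitionCost

open Finset Real ProbabilityTheory

lemma one_sub_add_mul_exp_le {p : ℝ} (hp : p ∈ Set.Icc (0 : ℝ) 1) (l : ℝ) :
    1 - p + p * exp l ≤ exp (p * l + l ^ 2 / 8) := by
  let X : Bool → ℝ := fun b => if b then 1 else 0
  have hX : ∀ b, X b ∈ Set.Icc 0 1 := by simp [X]
  have hmgf := (hasSubgaussianMGF_of_mem_Icc (μ := bernoulliMeasure true false ⟨p, hp⟩)
    (measurable_of_finite X).aemeasurable (.of_forall hX)).mgf_le l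
  have hcentered : p * exp (l * (1 - p)) + (1 - p) * exp (-(l * p))
      ≤ exp ((2 ^ 2)⁻¹ * l ^ 2 / 2) := by
    simpa [mgf, integral_bernoulliMeasure, X] using hmgf
  calc 1 - p + p * exp l
      = exp (p * l) * (p * exp (l * (1 - p)) + (1 - p) * exp (-(l * p))) := by
        rw [mul_add, mul_left_comm, ← exp_add, mul_left_comm, ← exp_add, mul_comm p l, mul_sub,
          mul_one, add_sub_cancel, add_neg_cancel, exp_zero, mul_one, add_comm]
    _ ≤ exp (p * l) * exp ((2 ^ 2)⁻¹ * l ^ 2 / 2) := by gcongr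
    _ = exp (p * l + l ^ 2 / 8) := by
        rw [← exp_add]
        ring_nf

section Sampling

lemma choose_mul_pow_le_choose_mul_pow {b n : ℕ} (hbn : b ≤ n) (i : ℕ) :
    b.choose i * n ^ i ≤ n.choose i * b ^ i := by
  have hdesc : b.descFactorial i * n ^ i ≤ n.descFactorial i * b ^ i := by
    rw [Nat.descFactorial_eq_prod_range, Nat.descFactorial_eq_prod_range]
    nth_rewrite 2 [← card_range i]
    nth_rewrite 4 [← card_range i]
    rw [prod_mul_pow_card, prod_mul_pow_card]
    refine prod_le_prod' fun j _ => ?_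
    rw [Nat.sub_mul, Nat.sub_mul, mul_comm n b]
    gcongr
  rw [Nat.descFactorial_eq_factorial_mul_choose, Nat.descFactorial_eq_factorial_mul_choose,
    mul_assoc, mul_assoc] at hdesc
  exact Nat.le_of_mul_le_mul_left hdesc i.factorial_pos

lemma choose_le_choose_mul_div_pow {b n : ℕ} (hbn : b ≤ n) (i : ℕ) :
    (b.choose i : ℝ) ≤ n.choose i * ((b : ℝ) / n) ^ i := by
  rcases n.eq_zero_or_pos with rfl | hn
  · obtain rfl : b = 0 := by omega
    cases i <;> simp
  · rw [div_pow, ← mul_div_assoc, le_div_iff₀ (by positivity)]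
    exact_mod_cast choose_mul_pow_le_choose_mul_pow hbn i

lemma one_add_pow_eq_sum_range_succ {R : Type*} [CommSemiring R] (y : R) {m s : ℕ} (hms : m ≤ s) :
    (1 + y) ^ m = ∑ i ∈ range (s + 1), (m.choose i : R) * y ^ i := by
  have hbinomial : (1 + y) ^ m = ∑ i ∈ range (m + 1), (m.choose i : R) * y ^ i := by
    rw [add_comm 1 y, add_pow]
    exact sum_congr rfl fun i _ => by rw [one_pow, mul_one, mul_comm]
  rw [hbinomial]
  refine sum_subset (range_subset_range.2 (by omega)) fun i _ hi => ?_
  rw [mem_range, not_lt] at hi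
  rw [Nat.choose_eq_zero_of_lt hi, Nat.cast_zero, zero_mul]

variable {ι : Type*} [Fintype ι] [DecidableEq ι]

lemma sum_choose_card_inter (B : Finset ι) {s i : ℕ} (his : i ≤ s) :
    ∑ S ∈ univ.powersetCard s, (#(S ∩ B)).choose i
      = (#B).choose i * (Fintype.card ι - i).choose (s - i) := by
  have hsubsets (S : Finset ι) :
      (#(S ∩ B)).choose i = #((B.powersetCard i).bipartiteAbove (fun S I => I ⊆ S) S) := by
    rw [← card_powersetCard]
    congr 1
    ext I
    simp only [mem_powersetCard, mem_bipartiteAbove, subset_inter_iff]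
    tauto
  have hsupersets : ∀ I ∈ B.powersetCard i,
      #((univ.powersetCard s).bipartiteBelow (fun S I => I ⊆ S) I)
        = (Fintype.card ι - i).choose (s - i) := by
    intro I hI
    obtain rfl := (mem_powersetCard.1 hI).2
    exact card_filter_powersetCard_subset I univ s (subset_univ I) his
  simp only [hsubsets, sum_card_bipartiteAbove_eq_sum_card_bipartiteBelow,
    sum_congr rfl hsupersets, sum_const, card_powersetCard, smul_eq_mul]

/- The left side is `(n.choose s)` times the moment generating function of a hypergeometric
variable, the right side that of a binomial one; the factorial moments compare termwise. -/
lemma sum_one_add_pow_card_inter_le (B : Finset ι) (s : ℕ) {y : ℝ} (hy : 0 ≤ y) :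
    ∑ S ∈ univ.powersetCard s, (1 + y) ^ #(S ∩ B)
      ≤ (Fintype.card ι).choose s * (1 + (#B : ℝ) / Fintype.card ι * y) ^ s := by
  set n := Fintype.card ι
  have hexpand : ∀ S ∈ univ.powersetCard s,
      (1 + y) ^ #(S ∩ B) = ∑ i ∈ range (s + 1), ((#(S ∩ B)).choose i : ℝ) * y ^ i :=
    fun S hS => one_add_pow_eq_sum_range_succ y <|
      (card_le_card inter_subset_left).trans (mem_powersetCard.1 hS).2.le
  rw [sum_congr rfl hexpand, sum_comm, one_add_pow_eq_sum_range_succ _ le_rfl, mul_sum]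
  refine sum_le_sum fun i hi => ?_
  have his : i ≤ s := mem_range_succ_iff.1 hi
  have hchoose : (n.choose s : ℝ) * s.choose i = n.choose i * (n - i).choose (s - i) := by
    exact_mod_cast Nat.choose_mul his
  calc ∑ S ∈ univ.powersetCard s, ((#(S ∩ B)).choose i : ℝ) * y ^ i
      = (#B).choose i * ((n - i).choose (s - i) * y ^ i) := by
        rw [← sum_mul, ← mul_assoc]
        exact_mod_cast congrArg (fun m : ℕ => (m : ℝ) * y ^ i) (sum_choose_card_inter B his)
    _ ≤ n.choose i * ((#B : ℝ) / n) ^ i * ((n - i).choose (s - i) * y ^ i) := by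
        gcongr
        exact choose_le_choose_mul_div_pow (card_le_univ B) i
    _ = n.choose s * (s.choose i * ((#B : ℝ) / n * y) ^ i) := by
        linear_combination -((#B : ℝ) / n * y) ^ i * hchoose

lemma card_filter_le_card_inter_le (B : Finset ι) {s : ℕ} (hs : 0 < s) {g : ℝ} (hg : 0 ≤ g) :
    (#{S ∈ univ.powersetCard s | (#B : ℝ) * s / Fintype.card ι + g ≤ #(S ∩ B)} : ℝ)
      ≤ (Fintype.card ι).choose s * exp (-2 * g ^ 2 / s) := by
  set n := Fintype.card ι
  set p : ℝ := (#B : ℝ) / n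
  have hp : p ∈ Set.Icc (0 : ℝ) 1 :=
    ⟨by positivity, div_le_one_of_le₀ (mod_cast card_le_univ B) (by positivity)⟩
  -- minimises the exponent `s * (p * l + l ^ 2 / 8) - l * (p * s + g)` of Chernoff's bound
  set l : ℝ := 4 * g / s
  have hl : 0 ≤ l := by positivity
  have hmarkov : #{S ∈ univ.powersetCard s | (#B : ℝ) * s / n + g ≤ #(S ∩ B)}
        * exp (l * (p * s + g)) ≤ ∑ S ∈ univ.powersetCard s, exp l ^ #(S ∩ B) := by
    rw [← nsmul_eq_mul]
    refine (card_nsmul_le_sum _ _ _ fun S hS => ?_).trans <|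
      sum_le_sum_of_subset_of_nonneg (filter_subset _ _) fun _ _ _ => by positivity
    rw [← exp_nat_mul, mul_comm, div_mul_eq_mul_div]
    gcongr
    exact (mem_filter.1 hS).2
  have hmgf : ∑ S ∈ univ.powersetCard s, exp l ^ #(S ∩ B)
      ≤ n.choose s * exp (s * (p * l + l ^ 2 / 8)) := by
    have hcompare := sum_one_add_pow_card_inter_le B s (sub_nonneg.2 (one_le_exp hl))
    rw [add_sub_cancel] at hcompare
    refine hcompare.trans ?_
    rw [exp_nat_mul]
    have hp0 := hp.1
    have hy := sub_nonneg.2 (one_le_exp hl)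
    gcongr
    linarith [one_sub_add_mul_exp_le hp l]
  have hexponent : -2 * g ^ 2 / s = s * (p * l + l ^ 2 / 8) - l * (p * s + g) := by
    simp only [l]
    field_simp
    ring
  rw [hexponent, exp_sub, ← mul_div_assoc, le_div_iff₀ (exp_pos _)]
  exact hmarkov.trans hmgf

lemma card_filter_card_inter_le_le (A : Finset ι) {s : ℕ} (hs : 0 < s) {g : ℝ} (hg : 0 ≤ g) :
    (#{S ∈ univ.powersetCard s | (#(S ∩ A) : ℝ) ≤ #A * s / Fintype.card ι - g} : ℝ)
      ≤ (Fintype.card ι).choose s * exp (-2 * g ^ 2 / s) := by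
  refine le_trans ?_ (card_filter_le_card_inter_le Aᶜ hs hg)
  refine Nat.cast_le.2 <| card_le_card fun S hSmem => ?_
  obtain ⟨hS, hle⟩ := mem_filter.1 hSmem
  refine mem_filter.2 ⟨hS, ?_⟩
  have hScard : #S = s := (mem_powersetCard.1 hS).2
  have hsplit : (#(S ∩ A) : ℝ) + #(S ∩ Aᶜ) = s := by
    rw [← sdiff_eq_inter_compl]
    exact_mod_cast hScard ▸ card_inter_add_card_sdiff S A
  have hcompl : (#A : ℝ) + #Aᶜ = Fintype.card ι := mod_cast card_add_card_compl A
  have hn : (0 : ℝ) < Fintype.card ι := mod_cast (hScard ▸ hs).trans_le (card_le_univ S)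
  have hmean : (#A : ℝ) * s / Fintype.card ι + #Aᶜ * s / Fintype.card ι = s := by
    rw [← add_div, ← add_mul, hcompl, mul_div_cancel_left₀ _ hn.ne']
  linarith

end Sampling

section Averaging

variable {Ω : Type*} {Q : Finset Ω} {f : Ω → ℝ} {c ε : ℝ}

lemma one_sub_le_card_filter_lt_div_card (hQ : Q.Nonempty)
    (hbad : (#{ω ∈ Q | c ≤ f ω} : ℝ) ≤ #Q * ε) :
    1 - ε ≤ (#{ω ∈ Q | f ω < c} : ℝ) / #Q := by
  have hsplit : (#{ω ∈ Q | f ω < c} : ℝ) + #{ω ∈ Q | c ≤ f ω} = #Q := by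
    simp only [← not_lt]
    exact_mod_cast card_filter_add_card_filter_not (s := Q) (f · < c)
  rw [le_div_iff₀ (mod_cast hQ.card_pos)]
  linarith

lemma sum_div_card_le_add_mul {M : ℝ} (hQ : Q.Nonempty) (hc : 0 ≤ c) (hM : 0 ≤ M)
    (hf : ∀ ω ∈ Q, f ω ≤ M) (hbad : (#{ω ∈ Q | c ≤ f ω} : ℝ) ≤ #Q * ε) :
    (∑ ω ∈ Q, f ω) / #Q ≤ c + M * ε := by
  rw [div_le_iff₀ (mod_cast hQ.card_pos)]
  calc ∑ ω ∈ Q, f ω ≤ ∑ ω ∈ Q, (c + if c ≤ f ω then M else 0) := by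
        refine sum_le_sum fun ω hω => ?_
        split_ifs with hcf
        · linarith [hf ω hω]
        · linarith
    _ = #Q * c + #{ω ∈ Q | c ≤ f ω} * M := by
        rw [sum_add_distrib, ← sum_filter, sum_const, sum_const, nsmul_eq_mul, nsmul_eq_mul]
    _ ≤ #Q * c + #Q * ε * M := by gcongr
    _ = (c + M * ε) * #Q := by ring

end Averaging

section Pivot

variable {ι α : Type*} [Fintype ι] [LinearOrder α]

lemma exists_card_eq_forall_le_of_notMem (x : ι → α) {m : ℕ} (hm : m ≤ Fintype.card ι) :
    ∃ A : Finset ι, #A = m ∧ ∀ a ∈ A, ∀ b ∉ A, x a ≤ x b := by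
  classical
  induction m with
  | zero => exact ⟨∅, rfl, by simp⟩
  | succ m ih =>
    obtain ⟨A, hA, hlow⟩ := ih (by omega)
    have hne : Aᶜ.Nonempty := by
      rw [← card_pos, card_compl]
      omega
    obtain ⟨a, ha, hmin⟩ := exists_min_image Aᶜ x hne
    rw [mem_compl] at ha
    refine ⟨insert a A, by rw [card_insert_of_notMem ha, hA], fun i hi b hb => ?_⟩
    obtain ⟨-, hbA⟩ := not_or.1 (mem_insert.not.1 hb)
    rcases mem_insert.1 hi with rfl | hi
    · exact hmin b (mem_compl.2 hbA)
    · exact hlow i hi b hbA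

variable [DecidableEq ι]

lemma card_inter_le_of_card_filter_lt_le {x : ι → α} {A S : Finset ι} {w : α} {k : ℕ}
    (hA : ∀ a ∈ A, ∀ b ∉ A, x a ≤ x b) (hS : #{j ∈ S | x j < w} ≤ k)
    (hcard : #A ≤ k + #{j ∈ Sᶜ | x j < w}) : #(S ∩ A) ≤ k := by
  by_cases hw : ∀ a ∈ A, x a < w
  · refine (card_le_card fun a ha => ?_).trans hS
    rw [mem_inter] at ha
    exact mem_filter.2 ⟨ha.1, hw a ha.2⟩
  · push Not at hw
    obtain ⟨a, ha, hwa⟩ := hw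
    have hbelow : #{j ∈ Sᶜ | x j < w} ≤ #(A \ S) := by
      refine card_le_card fun b hb => ?_
      rw [mem_filter, mem_compl] at hb
      refine mem_sdiff.2 ⟨by_contra fun hbA => ?_, hb.1⟩
      exact (hb.2.trans_le hwa).not_ge (hA a ha b hbA)
    have hsplit := card_inter_add_card_sdiff A S
    rw [inter_comm] at hsplit
    omega

lemma add_le_hypergeometric_mean {s n t g k : ℝ} (hs : 0 < s) (hsn : s ≤ n) (hg : 0 ≤ g)
    (hk : k ≤ t * s + g) : k + g ≤ (k + (t * (n - s) + 2 * g * n / s)) * s / n := by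
  have hn : 0 < n := hs.trans_le hsn
  have hgap : (k + (t * (n - s) + 2 * g * n / s)) * s / n - (k + g)
      = ((t * s + g - k) * (n - s) + g * s) / n := by
    field_simp
    ring
  have : 0 ≤ ((t * s + g - k) * (n - s) + g * s) / n := by
    have := sub_nonneg.2 hk
    have := sub_nonneg.2 hsn
    positivity
  linarith

lemma cost_threshold_nonneg {s n t g : ℝ} (hs : 0 < s) (hsn : s ≤ n) (hg : 0 ≤ g)
    (ht : 0 ≤ t * s + g) :
    0 ≤ (1 + t) * (n - s) + 2 * g * n / s := by
  have hsum : (1 + t) * (n - s) + 2 * g * n / s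
      = (n - s) + ((t * s + g) * (n - s) + g * (n + s)) / s := by
    field_simp
    ring
  have := sub_nonneg.2 hsn
  have := hs.trans_le hsn
  rw [hsum]
  positivity

variable {s : ℕ} {x : ι → α} {t g : ℝ} {w : Finset ι → α}

lemma card_filter_le_card_compl_filter_lt_le (hs : 0 < s) (hg : 0 ≤ g)
    (hw : ∀ S, #S = s → (#{j ∈ S | x j < w S} : ℝ) ≤ t * s + g) :
    (#{S ∈ univ.powersetCard s | t * (Fintype.card ι - s) + 2 * g * Fintype.card ι / s
        ≤ #{j ∈ Sᶜ | x j < w S}} : ℝ)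
      ≤ (Fintype.card ι).choose s * exp (-2 * g ^ 2 / s) := by
  set n := Fintype.card ι
  set T : ℝ := t * (n - s) + 2 * g * n / s
  rcases eq_empty_or_nonempty {S ∈ univ.powersetCard s | T ≤ #{j ∈ Sᶜ | x j < w S}} with
    hempty | ⟨S₀, hS₀⟩
  · rw [hempty, card_empty, Nat.cast_zero]
    positivity
  rw [mem_filter, mem_powersetCard] at hS₀
  obtain ⟨⟨-, hS₀card⟩, hTS₀⟩ := hS₀
  have hsn : s ≤ n := hS₀card ▸ card_le_univ S₀
  set k := min s ⌊t * s + g⌋₊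
  have hkr : (k : ℝ) ≤ t * s + g :=
    (Nat.cast_le.2 (min_le_right _ _)).trans <|
      Nat.floor_le ((Nat.cast_nonneg _).trans (hw S₀ hS₀card))
  have hwk (S : Finset ι) (hS : #S = s) : #{j ∈ S | x j < w S} ≤ k :=
    le_min ((card_filter_le _ _).trans hS.le) (Nat.le_floor (hw S hS))
  have hkT : k + ⌈T⌉₊ ≤ n := by
    have hceil : ⌈T⌉₊ ≤ #S₀ᶜ := (Nat.ceil_le.2 hTS₀).trans (card_filter_le _ _)
    rw [card_compl, hS₀card] at hceil
    omega
  obtain ⟨A, hA, hlow⟩ := exists_card_eq_forall_le_of_notMem x hkT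
  refine le_trans ?_ (card_filter_card_inter_le_le A hs hg)
  refine Nat.cast_le.2 <| card_le_card fun S hSmem => ?_
  obtain ⟨hS, hTS⟩ := mem_filter.1 hSmem
  refine mem_filter.2 ⟨hS, ?_⟩
  have hinter : #(S ∩ A) ≤ k :=
    card_inter_le_of_card_filter_lt_le hlow (hwk S (mem_powersetCard.1 hS).2) <| by
      rw [hA]
      gcongr
      exact Nat.ceil_le.2 hTS
  have hmean := add_le_hypergeometric_mean (mod_cast hs) (mod_cast hsn) hg hkr (n := n)
  rw [hA, Nat.cast_add]
  calc (#(S ∩ A) : ℝ) ≤ k := mod_cast hinter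
    _ ≤ (k + T) * s / n - g := le_sub_iff_add_le.2 hmean
    _ ≤ (k + ⌈T⌉₊) * s / n - g := by
      gcongr
      exact Nat.le_ceil T

lemma card_filter_le_cost_le (hs : 0 < s) (hg : 0 ≤ g)
    (hw : ∀ S, #S = s → (#{j ∈ S | x j < w S} : ℝ) ≤ t * s + g) {cost : Finset ι → ℕ}
    (hcost : ∀ S, #S = s → cost S ≤ #Sᶜ + #{j ∈ Sᶜ | x j < w S}) {cbar : ℝ}
    (hcbar : (1 + t) * (Fintype.card ι - s) + 2 * g * Fintype.card ι / s ≤ cbar) :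
    (#{S ∈ univ.powersetCard s | cbar ≤ cost S} : ℝ)
      ≤ (Fintype.card ι).choose s * exp (-2 * g ^ 2 / s) := by
  refine le_trans ?_ (card_filter_le_card_compl_filter_lt_le hs hg hw)
  refine Nat.cast_le.2 <| card_le_card fun S hSmem => ?_
  obtain ⟨hS, hcS⟩ := mem_filter.1 hSmem
  refine mem_filter.2 ⟨hS, ?_⟩
  have hScard : #S = s := (mem_powersetCard.1 hS).2
  have hcompl : (#S : ℝ) + #Sᶜ = Fintype.card ι := mod_cast card_add_card_compl S
  have hcostS : (cost S : ℝ) ≤ #Sᶜ + #{j ∈ Sᶜ | x j < w S} := mod_cast hcost S hScard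
  rw [hScard] at hcompl
  linarith

end Pivot

theorem partition_cost_bound_general {ι α : Type*} [Fintype ι] [DecidableEq ι] [LinearOrder α]
    {s : ℕ} (hs : 0 < s) (hsn : s ≤ Fintype.card ι) (x : ι → α) {θ g : ℝ} (hg : 0 ≤ g)
    (u v : Finset ι → α)
    (hu : ∀ S, #S = s → (#{j ∈ S | u S < x j} : ℝ) ≤ (1 - θ) * s + g)
    (hv : ∀ S, #S = s → (#{j ∈ S | x j < v S} : ℝ) ≤ θ * s + g)
    (cost : Finset ι → ℕ)
    (hcost : ∀ S, #S = s → cost S ≤ #Sᶜ +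
      if θ < 1 / 2 then #{j ∈ Sᶜ | x j < v S} else #{j ∈ Sᶜ | u S < x j})
    {cbar : ℝ}
    (hcbar : (1 + min θ (1 - θ)) * (Fintype.card ι - s) + 2 * g * Fintype.card ι / s ≤ cbar) :
    1 - exp (-2 * g ^ 2 / s)
      ≤ (#{S ∈ (univ : Finset ι).powersetCard s | (cost S : ℝ) < cbar} : ℝ)
          / #((univ : Finset ι).powersetCard s)
    ∧ (∑ S ∈ (univ : Finset ι).powersetCard s, (cost S : ℝ)) / #((univ : Finset ι).powersetCard s)
        ≤ cbar + 2 * (Fintype.card ι - s) * exp (-2 * g ^ 2 / s) := by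
  have hne : ((univ : Finset ι).powersetCard s).Nonempty := powersetCard_nonempty.2 hsn
  have hs' : (0 : ℝ) < s := mod_cast hs
  have hsn' : (s : ℝ) ≤ Fintype.card ι := mod_cast hsn
  have hcbar_nonneg : 0 ≤ cbar := by
    obtain ⟨S, hS⟩ := hne
    have hθs := (Nat.cast_nonneg _).trans (hv S (mem_powersetCard.1 hS).2)
    have hθs' := (Nat.cast_nonneg _).trans (hu S (mem_powersetCard.1 hS).2)
    refine le_trans ?_ hcbar
    rcases min_choice θ (1 - θ) with hmin | hmin <;> rw [hmin]
    · exact cost_threshold_nonneg hs' hsn' hg hθs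
    · exact cost_threshold_nonneg hs' hsn' hg hθs'
  have hcost_le : ∀ S ∈ univ.powersetCard s, (cost S : ℝ) ≤ 2 * (Fintype.card ι - s) := by
    intro S hS
    have hScard := (mem_powersetCard.1 hS).2
    have hcompl : (#S : ℝ) + #Sᶜ = Fintype.card ι := mod_cast card_add_card_compl S
    have hfilter : cost S ≤ #Sᶜ + #Sᶜ := (hcost S hScard).trans <| by
      split_ifs <;> exact Nat.add_le_add_left (card_filter_le _ _) _
    have : (cost S : ℝ) ≤ #Sᶜ + #Sᶜ := mod_cast hfilter
    rw [hScard] at hcompl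
    linarith
  have htail : (#{S ∈ univ.powersetCard s | cbar ≤ cost S} : ℝ)
      ≤ #((univ : Finset ι).powersetCard s) * exp (-2 * g ^ 2 / s) := by
    rw [card_powersetCard, card_univ]
    by_cases hθ : θ < 1 / 2
    · rw [min_eq_left (by linarith)] at hcbar
      simp only [if_pos hθ] at hcost
      exact card_filter_le_cost_le hs hg hv hcost hcbar
    · rw [min_eq_right (by linarith)] at hcbar
      simp only [if_neg hθ] at hcost
      exact card_filter_le_cost_le (x := OrderDual.toDual ∘ x) (w := OrderDual.toDual ∘ u) hs hg hu
        hcost hcbar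
  exact ⟨one_sub_le_card_filter_lt_div_card hne htail,
    sum_div_card_le_add_mul hne hcbar_nonneg (by linarith) hcost_le htail⟩

section OrderStatistics

section SortedList

variable {α : Type*} [LinearOrder α] {L : List α} {k : ℕ}

lemma countP_lt_getElem_le (hL : L.Pairwise (· ≤ ·)) (hk : k < L.length) :
    L.countP (· < L[k]) ≤ k := by
  have hdrop : (L.drop k).countP (· < L[k]) = 0 := by
    refine List.countP_eq_zero.2 fun a ha => ?_
    obtain ⟨m, hm, rfl⟩ := List.mem_drop_iff_getElem.1 ha
    simpa using hL.rel_get_of_le (a := ⟨k, hk⟩) (b := ⟨k + m, by omega⟩) (by simp)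
  have hsplit := List.countP_append (p := (· < L[k])) (l₁ := L.take k) (l₂ := L.drop k)
  rw [List.take_append_drop, hdrop, add_zero] at hsplit
  exact hsplit.trans_le <| List.countP_le_length.trans (List.length_take_le k L)

lemma countP_getElem_lt_le (hL : L.Pairwise (· ≤ ·)) (hk : k < L.length) :
    L.countP (L[k] < ·) ≤ L.length - (k + 1) := by
  have htake : (L.take (k + 1)).countP (L[k] < ·) = 0 := by
    refine List.countP_eq_zero.2 fun a ha => ?_
    obtain ⟨m, hm, rfl⟩ := List.mem_take_iff_getElem.1 ha
    simpa using hL.rel_get_of_le (a := ⟨m, by omega⟩) (b := ⟨k, hk⟩) (by simp; omega)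
  have hsplit := List.countP_append (p := (L[k] < ·)) (l₁ := L.take (k + 1)) (l₂ := L.drop (k + 1))
  rw [List.take_append_drop, htake, zero_add] at hsplit
  exact hsplit.trans_le <| List.countP_le_length.trans_eq List.length_drop

end SortedList

variable {ι : Type*} (x : ι → ℝ) (S : Finset ι)

lemma card_filter_eq_countP_sort (p : ℝ → Prop) [DecidablePred p] :
    #{j ∈ S | p (x j)} = ((S.val.map x).sort (· ≤ ·)).countP p := by
  rw [← Multiset.coe_countP, Multiset.sort_eq, Multiset.countP_map]
  rfl

variable {x S} {i : ℕ} {r : ℝ}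

lemma kthSmallest_map_eq_getElem (hi : i - 1 < ((S.val.map x).sort (· ≤ ·)).length) :
    kthSmallest (S.val.map x) i = ((S.val.map x).sort (· ≤ ·))[i - 1] :=
  List.getD_eq_getElem _ _ hi

lemma card_filter_lt_kthSmallest_le (hS : S.Nonempty) (hr : 0 ≤ r)
    (hi : (i : ℤ) = min ⌈r⌉ #S) :
    (#{j ∈ S | x j < kthSmallest (S.val.map x) i} : ℝ) ≤ r := by
  have hlength : ((S.val.map x).sort (· ≤ ·)).length = #S := by simp
  have hpos := hS.card_pos
  have hrank : ((i - 1 : ℕ) : ℝ) ≤ r := by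
    rcases i with _ | i
    · simpa using hr
    · have : ((i : ℤ) : ℝ) < r := Int.lt_ceil.1 (by omega)
      simpa using this.le
  refine le_trans (Nat.cast_le.2 ?_) hrank
  rw [card_filter_eq_countP_sort x S (· < _), kthSmallest_map_eq_getElem (by omega)]
  exact countP_lt_getElem_le (Multiset.pairwise_sort _ _) (by omega)

lemma card_filter_kthSmallest_lt_le (hS : S.Nonempty) (hr : r ≤ #S)
    (hi : (i : ℤ) = max ⌈r⌉ 1) :
    (#{j ∈ S | kthSmallest (S.val.map x) i < x j} : ℝ) ≤ #S - r := by
  have hlength : ((S.val.map x).sort (· ≤ ·)).length = #S := by simp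
  have hpos := hS.card_pos
  have hceil : ⌈r⌉ ≤ (#S : ℤ) := Int.ceil_le.2 (mod_cast hr)
  have hri : r ≤ i := by
    have : ⌈r⌉ ≤ (i : ℤ) := by omega
    exact_mod_cast Int.ceil_le.1 this
  calc (#{j ∈ S | kthSmallest (S.val.map x) i < x j} : ℝ)
      ≤ (#S - (i - 1 + 1) : ℕ) := by
        rw [card_filter_eq_countP_sort x S (_ < ·), kthSmallest_map_eq_getElem (by omega),
          ← hlength]
        exact_mod_cast countP_getElem_lt_le (Multiset.pairwise_sort _ _) (by omega)
    _ = #S - i := by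
        rw [Nat.sub_add_cancel (by omega), Nat.cast_sub (by omega)]
    _ ≤ #S - r := by gcongr

end OrderStatistics

end PartitionCost

/-- Bound on the partitioning cost `c` of one Select iteration: with pivots
`u = y*_{i_u}`, `v = y*_{i_v}` from the random sample `S`, and
`c̄ = (1 + min{θ,1−θ})(s₊−s) + 3g·s₊/s`, we have `P[c < c̄] ≥ 1 − exp(−2g²/s)`
and `E c ≤ c̄ + 2(s₊−s)·exp(−2g²/s)`. -/
theorem partition_cost_bound (s splus : ℕ) (hs : 0 < s) (hss : s < splus)
    (x : Fin splus → ℝ) (θ g : ℝ) (hθ : θ ∈ Set.Icc (0 : ℝ) 1) (hg : 0 ≤ g)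
    (iu iv : ℕ) (hiu : (iu : ℤ) = max ⌈θ * (s : ℝ) - g⌉ 1)
    (hiv : (iv : ℤ) = min ⌈θ * (s : ℝ) + g⌉ (s : ℤ))
    (cost : Finset (Fin splus) → ℕ)
    (hcost : ∀ S : Finset (Fin splus),
      cost S =
        (let u := kthSmallest (S.val.map x) iu
         let v := kthSmallest (S.val.map x) iv
         if u = v then splus - s
         else (splus - s) +
           (if θ < 1 / 2 then
              (((Finset.univ : Finset (Fin splus)) \ S).filter (fun j => x j < v)).card
            else
              (((Finset.univ : Finset (Fin splus)) \ S).filter (fun j => u < x j)).card)))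
    (cbar : ℝ)
    (hcbar : cbar = (1 + min θ (1 - θ)) * ((splus : ℝ) - (s : ℝ))
        + 3 * g * (splus : ℝ) / (s : ℝ)) :
    1 - Real.exp (-2 * g ^ 2 / (s : ℝ))
      ≤ ((((Finset.univ : Finset (Fin splus)).powersetCard s).filter
            (fun S => ((cost S : ℝ) < cbar))).card : ℝ)
          / ((((Finset.univ : Finset (Fin splus)).powersetCard s)).card : ℝ)
    ∧ (∑ S ∈ (Finset.univ : Finset (Fin splus)).powersetCard s, (cost S : ℝ))
          / ((((Finset.univ : Finset (Fin splus)).powersetCard s)).card : ℝ)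
        ≤ cbar + 2 * ((splus : ℝ) - (s : ℝ)) * Real.exp (-2 * g ^ 2 / (s : ℝ)) := by
  obtain ⟨hθ0, hθ1⟩ := hθ
  have hnonempty {S : Finset (Fin splus)} (hS : S.card = s) : S.Nonempty :=
    Finset.card_pos.1 (hS ▸ hs)
  have hu (S : Finset (Fin splus)) (hS : S.card = s) :
      ((S.filter fun j => kthSmallest (S.val.map x) iu < x j).card : ℝ) ≤ (1 - θ) * s + g := by
    refine (card_filter_kthSmallest_lt_le (hnonempty hS) (r := θ * s - g) ?_ hiu).trans ?_ <;>
      rw [hS] <;> nlinarith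
  have hv (S : Finset (Fin splus)) (hS : S.card = s) :
      ((S.filter fun j => x j < kthSmallest (S.val.map x) iv).card : ℝ) ≤ θ * s + g :=
    card_filter_lt_kthSmallest_le (hnonempty hS) (by positivity) (hS ▸ hiv)
  have hcost_le (S : Finset (Fin splus)) (hS : S.card = s) : cost S ≤ Sᶜ.card +
      if θ < 1 / 2 then (Sᶜ.filter fun j => x j < kthSmallest (S.val.map x) iv).card
      else (Sᶜ.filter fun j => kthSmallest (S.val.map x) iu < x j).card := by
    rw [hcost S, Finset.card_compl, Fintype.card_fin, hS, Finset.compl_eq_univ_sdiff]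
    dsimp only
    split_ifs <;> omega
  have hcbar_ge : (1 + min θ (1 - θ)) * (Fintype.card (Fin splus) - s)
      + 2 * g * Fintype.card (Fin splus) / s ≤ cbar := by
    rw [hcbar, Fintype.card_fin]
    gcongr
    norm_num
  simpa only [Fintype.card_fin] using
    partition_cost_bound_general hs (by simpa using hss.le) x hg _ _ hu hv cost hcost_le hcbar_ge
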